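/- arXiv:2412.05036 — 11 statements merged into one kernel-verified Lean document; each statement's English description precedes it below -/
import Mathlib

section
/- Let I ⊆ ℝ be an open interval and let V : ℝ → ℝ be twice differentiable on I with V(x) > 0 for all x ∈ I. Then 2·V''(x)·V(x) − 3·(V'(x))² = 0 for all x ∈ I if and only if there exist real constants a, b such that for all x ∈ I one has a·x + b ≠ 0 and V(x) = (a·x + b)⁻² (equivalently, V(x) = V₀/(x − x₀)² for some V₀ > 0 and x₀ ∉ I, together with the constant case a = 0). -/
/-!
The substitution `V = u⁻²`, i.e. `u = (√V)⁻¹`, linearizes the equation: `u' = -V' / (2 (√V)³)`, and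
the derivative of `V' / (√V)³` is `(2 V'' V - 3 V'²) / (2 (√V)⁵)`. Hence the Ricci scalar vanishes
on the interval only if `u'` is constant there, that is, `u` is affine. The converse is proved by
differentiating `(a x + b)⁻²` twice and using uniqueness of derivatives on the open set `I`.
-/

/-- An order-connected set of reals is preconnected, so the locally constant `f` is constant on all
of `I`. -/
lemma exists_const_of_hasDerivAt_zero {I : Set ℝ} (hIopen : IsOpen I) (hIconn : I.OrdConnected)
    {f : ℝ → ℝ} (hf : ∀ x ∈ I, HasDerivAt f 0 x) : ∃ c, ∀ x ∈ I, f x = c :=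
  hIopen.exists_is_const_of_deriv_eq_zero hIconn.isPreconnected
    (fun x hx => (hf x hx).differentiableAt.differentiableWithinAt)
    (fun x hx => (hf x hx).deriv)

/-- The two-dimensional Eisenhart metric `ds² = dx² + dz²/(α V(x))` is flat
(vanishing Ricci scalar, `2 V'' V − 3 (V')² = 0`) on an open interval `I` where
`V > 0` if and only if `V` is an Ermakov potential `V(x) = (a x + b)⁻²`. -/
theorem ricci_flat_iff_ermakov
    (I : Set ℝ) (hIopen : IsOpen I) (hIconn : I.OrdConnected)
    (V V' V'' : ℝ → ℝ)
    (hV' : ∀ x ∈ I, HasDerivAt V (V' x) x)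
    (hV'' : ∀ x ∈ I, HasDerivAt V' (V'' x) x)
    (hVpos : ∀ x ∈ I, 0 < V x) :
    (∀ x ∈ I, 2 * V'' x * V x - 3 * (V' x) ^ 2 = 0) ↔
      ∃ a b : ℝ, ∀ x ∈ I, a * x + b ≠ 0 ∧ V x = ((a * x + b) ^ 2)⁻¹ := by
  constructor
  · intro h
    have hW : ∀ x ∈ I, HasDerivAt (fun y => √(V y)) (V' x / (2 * √(V x))) x :=
      fun x hx => (hV' x hx).sqrt (hVpos x hx).ne'
    have hWne : ∀ x ∈ I, √(V x) ≠ 0 := fun x hx => (Real.sqrt_pos.2 (hVpos x hx)).ne'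
    obtain ⟨p, hp⟩ : ∃ p, ∀ x ∈ I, V' x / √(V x) ^ 3 = p := by
      refine exists_const_of_hasDerivAt_zero hIopen hIconn fun x hx => ?_
      have hne := hWne x hx
      refine ((hV'' x hx).fun_div ((hW x hx).fun_pow 3) (pow_ne_zero 3 hne)).congr_deriv ?_
      have h2 := h x hx
      have hs : √(V x) ^ 2 = V x := Real.sq_sqrt (hVpos x hx).le
      rw [← hs] at h2
      generalize √(V x) = w at *
      field_simp
      linear_combination w ^ 2 * h2
    obtain ⟨b, hb⟩ : ∃ b, ∀ x ∈ I, (√(V x))⁻¹ - (-p / 2) * x = b := by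
      refine exists_const_of_hasDerivAt_zero hIopen hIconn fun x hx => ?_
      have hne := hWne x hx
      refine (((hW x hx).fun_inv hne).fun_sub
        ((hasDerivAt_id' x).const_mul (-p / 2))).congr_deriv ?_
      rw [← hp x hx]
      field_simp
      ring
    refine ⟨-p / 2, b, fun x hx => ?_⟩
    have hu : -p / 2 * x + b = (√(V x))⁻¹ := by linear_combination -hb x hx
    rw [hu]
    refine ⟨inv_ne_zero (hWne x hx), ?_⟩
    rw [inv_pow, inv_inv, Real.sq_sqrt (hVpos x hx).le]
  · rintro ⟨a, b, h⟩
    have hl : ∀ x, HasDerivAt (fun y => a * y + b) a x := fun x => by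
      simpa using ((hasDerivAt_id' x).const_mul a).add_const b
    have h1 : ∀ x ∈ I, V' x = -2 * a / (a * x + b) ^ 3 := fun x hx => by
      have hne := (h x hx).1
      have hd := ((hl x).fun_pow 2).fun_inv (pow_ne_zero 2 hne)
      refine ((hV' x hx).unique (hd.congr_of_eventuallyEq ?_)).trans ?_
      · filter_upwards [hIopen.mem_nhds hx] with y hy using (h y hy).2
      · field_simp
        norm_num
        ring
    have h2 : ∀ x ∈ I, V'' x = 6 * a ^ 2 / (a * x + b) ^ 4 := fun x hx => by
      have hne := (h x hx).1
      have hd := (hasDerivAt_const x (-2 * a)).fun_div ((hl x).fun_pow 3) (pow_ne_zero 3 hne)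
      refine ((hV'' x hx).unique (hd.congr_of_eventuallyEq ?_)).trans ?_
      · filter_upwards [hIopen.mem_nhds hx] with y hy using h1 y hy
      · field_simp
        norm_num
        ring
    intro x hx
    have hne := (h x hx).1
    rw [h1 x hx, h2 x hx, (h x hx).2]
    field_simp
    ring
end

section
/- Let I ⊆ ℝ be an open interval, let V₁, V₂ : ℝ → ℝ be twice differentiable on I with V₂(x) > 0 for all x ∈ I and V₂ not constant on I. If for all x ∈ I one has V₂''(x)·V₂(x) − (V₂'(x))² = 0 and 3·V₂(x)·(V₁''(x)·V₂(x) − 3·V₁'(x)·V₂'(x)) + 6·V₁(x)·(V₂'(x))² = 0, then there exist real constants λ ≠ 0, C > 0, A, B such that for all x ∈ I: V₂(x) = C·e^{λx} and V₁(x) = A·e^{λx} + B·e^{2λx}. -/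
/-!
The first equation says that the logarithmic derivative `V₂' / V₂` has zero derivative, so
`V₂' = lam * V₂` with a constant `lam`, nonzero because `V₂'` does not vanish identically. The second
equation then has constant coefficients, `V₁'' - 3 lam V₁' + 2 lam² V₁ = 0`, and its characteristic
polynomial factors as `(r - lam) (r - 2 lam)`. Hence `V₁' - lam V₁` and `V₁' - 2 lam V₁` solve
first-order equations with rates `2 lam` and `lam`; both are exponentials by
`eq_mul_exp_of_hasDerivAt`, and their difference is `lam V₁`.
-/

theorem eq_of_hasDerivAt_zero {I : Set ℝ} (hI : IsOpen I) (hc : I.OrdConnected)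
    {f : ℝ → ℝ} (hf : ∀ x ∈ I, HasDerivAt f 0 x) {x y : ℝ} (hx : x ∈ I) (hy : y ∈ I) :
    f x = f y :=
  hI.is_const_of_deriv_eq_zero hc.isPreconnected
    (fun z hz => (hf z hz).differentiableAt.differentiableWithinAt)
    (fun z hz => (hf z hz).deriv) hx hy

/-- Holds because `f x * exp (-k x)` has zero derivative; `x₀` only fixes the constant. -/
theorem eq_mul_exp_of_hasDerivAt {I : Set ℝ} (hI : IsOpen I) (hc : I.OrdConnected)
    {f : ℝ → ℝ} {k x₀ : ℝ} (hx₀ : x₀ ∈ I) (hf : ∀ x ∈ I, HasDerivAt f (k * f x) x) :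
    ∀ x ∈ I, f x = f x₀ * Real.exp (-k * x₀) * Real.exp (k * x) := by
  intro x hx
  have hder : ∀ y ∈ I, HasDerivAt (fun z => f z * Real.exp (-k * z)) 0 y := by
    intro y hy
    have he : HasDerivAt (fun z : ℝ => Real.exp (-k * z)) (Real.exp (-k * y) * (-k * 1)) y :=
      ((hasDerivAt_id' y).const_mul (-k)).exp
    exact ((hf y hy).mul he).congr_deriv (by ring)
  have h : f x * Real.exp (-k * x) = f x₀ * Real.exp (-k * x₀) :=
    eq_of_hasDerivAt_zero hI hc hder hx hx₀
  rw [← h, mul_assoc, ← Real.exp_add]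
  simp

/-- Conformal flatness conditions of the four-dimensional Eisenhart metric
`dŝ² = dx² + dz² + (2/V₂) du dv − 2 (V₁/V₂²) du²`: on an open interval where
`V₂ > 0` and `V₂` is not constant, the system
`V₂'' V₂ − (V₂')² = 0`, `3 V₂ (V₁'' V₂ − 3 V₁' V₂') + 6 V₁ (V₂')² = 0`
forces `V₂(x) = C e^{λx}` and `V₁(x) = A e^{λx} + B e^{2λx}` (Morse potential). -/
theorem conformally_flat_H13hat
    (I : Set ℝ) (hIopen : IsOpen I) (hIconn : I.OrdConnected)
    (V₁ V₁' V₁'' V₂ V₂' V₂'' : ℝ → ℝ)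
    (hV₁' : ∀ x ∈ I, HasDerivAt V₁ (V₁' x) x)
    (hV₁'' : ∀ x ∈ I, HasDerivAt V₁' (V₁'' x) x)
    (hV₂' : ∀ x ∈ I, HasDerivAt V₂ (V₂' x) x)
    (hV₂'' : ∀ x ∈ I, HasDerivAt V₂' (V₂'' x) x)
    (hpos : ∀ x ∈ I, 0 < V₂ x)
    (hnonconst : ∃ x₁ ∈ I, V₂' x₁ ≠ 0)
    (heq1 : ∀ x ∈ I, V₂'' x * V₂ x - (V₂' x) ^ 2 = 0)
    (heq2 : ∀ x ∈ I,
      3 * V₂ x * (V₁'' x * V₂ x - 3 * V₁' x * V₂' x) + 6 * V₁ x * (V₂' x) ^ 2 = 0) :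
    ∃ lam C A B : ℝ, lam ≠ 0 ∧ 0 < C ∧ ∀ x ∈ I,
      V₂ x = C * Real.exp (lam * x) ∧
      V₁ x = A * Real.exp (lam * x) + B * Real.exp (2 * lam * x) := by
  obtain ⟨x₁, hx₁, hne⟩ := hnonconst
  have hlog : ∀ x ∈ I, V₂' x / V₂ x = V₂' x₁ / V₂ x₁ := by
    intro x hx
    refine eq_of_hasDerivAt_zero (f := fun z => V₂' z / V₂ z) hIopen hIconn (fun y hy => ?_) hx hx₁
    refine ((hV₂'' y hy).div (hV₂' y hy) (hpos y hy).ne').congr_deriv ?_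
    rw [div_eq_zero_iff]
    left
    linear_combination heq1 y hy
  have hlam : V₂' x₁ / V₂ x₁ ≠ 0 := div_ne_zero hne (hpos x₁ hx₁).ne'
  generalize V₂' x₁ / V₂ x₁ = lam at hlog hlam
  have h₂ : ∀ x ∈ I, V₂' x = lam * V₂ x := fun x hx =>
    (div_eq_iff (hpos x hx).ne').mp (hlog x hx)
  have hode : ∀ x ∈ I, V₁'' x - 3 * lam * V₁' x + 2 * lam ^ 2 * V₁ x = 0 := by
    intro x hx
    have h := heq2 x hx
    rw [h₂ x hx] at h
    have hsq : V₂ x ^ 2 ≠ 0 := pow_ne_zero 2 (hpos x hx).ne'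
    refine (mul_eq_zero.mp ?_).resolve_left hsq
    linear_combination h / 3
  have hV₂ := eq_mul_exp_of_hasDerivAt hIopen hIconn hx₁
    (fun x hx => (hV₂' x hx).congr_deriv (h₂ x hx))
  have hg := eq_mul_exp_of_hasDerivAt (f := fun z => V₁' z - lam * V₁ z) (k := 2 * lam)
    hIopen hIconn hx₁ (fun x hx =>
      ((hV₁'' x hx).sub ((hV₁' x hx).const_mul lam)).congr_deriv
        (by linear_combination hode x hx))
  have hh := eq_mul_exp_of_hasDerivAt (f := fun z => V₁' z - 2 * lam * V₁ z) (k := lam)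
    hIopen hIconn hx₁ (fun x hx =>
      ((hV₁'' x hx).sub ((hV₁' x hx).const_mul (2 * lam))).congr_deriv
        (by linear_combination hode x hx))
  refine ⟨lam, V₂ x₁ * Real.exp (-lam * x₁),
    -((V₁' x₁ - 2 * lam * V₁ x₁) * Real.exp (-lam * x₁)) / lam,
    (V₁' x₁ - lam * V₁ x₁) * Real.exp (-(2 * lam) * x₁) / lam,
    hlam, mul_pos (hpos x₁ hx₁) (Real.exp_pos _), fun x hx => ⟨hV₂ x hx, ?_⟩⟩
  refine mul_left_cancel₀ hlam ?_
  rw [mul_add, div_mul_eq_mul_div, div_mul_eq_mul_div, mul_div_cancel₀ _ hlam,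
    mul_div_cancel₀ _ hlam]
  linear_combination hg x hx - hh x hx
end

section
/- Let X, Y : ℝ → ℝ be twice differentiable with X''(t) = 0 and Y''(t) = 0 for all t (free-particle solutions), and suppose X(t)² + Y(t)² > 0 for all t. Set W := X(0)·Y'(0) − X'(0)·Y(0) and x(t) := √(X(t)² + Y(t)²). Then x is twice differentiable and satisfies x''(t) = W² / x(t)³ for all t; that is, x solves Newton's equation ẍ = −V'_A(x) for the Ermakov potential V_A(x) = V₀/x² with V₀ = −W²/2 replaced by force F(x) = 2V₀/x³, 2V₀ = W². -/
/-!
The Wronskian `X Y' - X' Y` of two free-particle solutions is conserved, hence equal to `W`.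
Differentiating `x² = X² + Y²` gives `x x' = X X' + Y Y'`, and once more
`x³ x'' = (X² + Y²)(X'² + Y'²) - (X X' + Y Y')²`, which is `(X Y' - X' Y)² = W²` by
Lagrange's identity.
-/

/-- Part (A) of the paper's main Theorem, concretely: if `X, Y` are free-particle
solutions (`X'' = 0`, `Y'' = 0`) with `X² + Y² > 0`, `W = X(0)Y'(0) − X'(0)Y(0)`,
then `x = √(X² + Y²)` solves Newton's equation for the Ermakov potential:
`x'' = W²/x³`. -/
theorem ermakov_from_free_particle
    (X X' Y Y' : ℝ → ℝ)
    (hX' : ∀ t, HasDerivAt X (X' t) t) (hX'' : ∀ t, HasDerivAt X' 0 t)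
    (hY' : ∀ t, HasDerivAt Y (Y' t) t) (hY'' : ∀ t, HasDerivAt Y' 0 t)
    (hpos : ∀ t, 0 < X t ^ 2 + Y t ^ 2)
    (W : ℝ) (hW : W = X 0 * Y' 0 - X' 0 * Y 0)
    (x : ℝ → ℝ) (hx : ∀ t, x t = Real.sqrt (X t ^ 2 + Y t ^ 2)) :
    ∃ x' : ℝ → ℝ, (∀ t, HasDerivAt x (x' t) t) ∧
      ∀ t, HasDerivAt x' (W ^ 2 / x t ^ 3) t := by
  -- The Wronskian has derivative `X * Y'' - X'' * Y = 0`, so it equals its value `W` at `0`.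
  have hder : ∀ t, HasDerivAt (fun s => X s * Y' s - X' s * Y s) 0 t := fun t => by
    refine (((hX' t).mul (hY'' t)).sub ((hX'' t).mul (hY' t))).congr_deriv ?_
    ring
  have hWt : ∀ t, X t * Y' t - X' t * Y t = W := fun t => by
    rw [hW]
    exact is_const_of_deriv_eq_zero (fun s => (hder s).differentiableAt)
      (fun s => (hder s).deriv) t 0
  have hxpos : ∀ t, 0 < x t := fun t => by
    rw [hx]
    exact Real.sqrt_pos.mpr (hpos t)
  have hxsq : ∀ t, x t ^ 2 = X t ^ 2 + Y t ^ 2 := fun t => by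
    rw [hx]
    exact Real.sq_sqrt (hpos t).le
  have hx' : ∀ t, HasDerivAt x ((X t * X' t + Y t * Y' t) / x t) t := fun t => by
    have hr : HasDerivAt (fun s => X s ^ 2 + Y s ^ 2) (2 * (X t * X' t + Y t * Y' t)) t := by
      refine (((hX' t).pow 2).add ((hY' t).pow 2)).congr_deriv ?_
      norm_num
      ring
    rw [funext hx]
    convert hr.sqrt (hpos t).ne' using 1
    rw [mul_div_mul_left _ _ two_ne_zero]
  refine ⟨fun t => (X t * X' t + Y t * Y' t) / x t, hx', fun t => ?_⟩
  have hne : x t ≠ 0 := (hxpos t).ne'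
  refine ((((hX' t).mul (hX'' t)).add ((hY' t).mul (hY'' t))).div (hx' t) hne).congr_deriv ?_
  simp only [Pi.add_apply, Pi.mul_apply]
  rw [← hWt t]
  field_simp
  -- Lagrange's identity: `(XY' - X'Y)² + (XX' + YY')² = (X² + Y²)(X'² + Y'²)`.
  rw [hxsq t]
  ring
end

section
/- Let W ∈ ℝ and let x : ℝ → ℝ be twice differentiable with x(t) > 0 and x''(t)·x(t)³ = W² for all t. Then there exist real constants a, b, c such that x(t)² = a·t² + b·t + c for all t, and these constants satisfy 4ac − b² = 4W². -/
/-!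
The quantity `E = x'² + W²/x²` (twice the energy) is conserved, since
`E' = 2 x' (x'' - W²/x³) = 0`. As `x x'' = W²/x²`, the derivative of `x x'` is
`x'² + W²/x² = E`, so `(x²)'' = 2E` is constant and `x²` is the quadratic
`E t² + 2 x(0) x'(0) t + x(0)²`. The discriminant identity is the definition of `E` at `t = 0`.
-/

lemma eq_at_zero_of_hasDerivAt_zero {f : ℝ → ℝ} (hf : ∀ t, HasDerivAt f 0 t) (t : ℝ) :
    f t = f 0 :=
  is_const_of_deriv_eq_zero (fun s => (hf s).differentiableAt) (fun s => (hf s).deriv) t 0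

/-- For any positive solution of the Ermakov equation `x'' x³ = W²`,
the square `x²` is a quadratic polynomial in time whose discriminant is
determined by `W`: `x(t)² = a t² + b t + c` with `4ac − b² = 4W²`. -/
theorem ermakov_square_is_quadratic
    (W : ℝ) (x x' x'' : ℝ → ℝ)
    (hx' : ∀ t, HasDerivAt x (x' t) t)
    (hx'' : ∀ t, HasDerivAt x' (x'' t) t)
    (hpos : ∀ t, 0 < x t)
    (hODE : ∀ t, x'' t * x t ^ 3 = W ^ 2) :
    ∃ a b c : ℝ, (∀ t, x t ^ 2 = a * t ^ 2 + b * t + c) ∧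
      4 * a * c - b ^ 2 = 4 * W ^ 2 := by
  have hne : ∀ t, x t ≠ 0 := fun t => (hpos t).ne'
  have hacc : ∀ t, x'' t = W ^ 2 / x t ^ 3 := fun t =>
    eq_div_of_mul_eq (pow_ne_zero 3 (hne t)) (hODE t)
  have hE : ∀ t, x' t ^ 2 + W ^ 2 / x t ^ 2 = x' 0 ^ 2 + W ^ 2 / x 0 ^ 2 := by
    refine eq_at_zero_of_hasDerivAt_zero (f := fun t => x' t ^ 2 + W ^ 2 / x t ^ 2) fun t => ?_
    have h := ((hx'' t).fun_pow 2).fun_add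
      ((hasDerivAt_const t (W ^ 2)).fun_div ((hx' t).fun_pow 2) (pow_ne_zero 2 (hne t)))
    refine h.congr_deriv ?_
    have := hne t
    rw [hacc t]
    field_simp
    push_cast
    ring
  set E := x' 0 ^ 2 + W ^ 2 / x 0 ^ 2 with hEdef
  have hP : ∀ t, x t * x' t - E * t = x 0 * x' 0 - E * 0 := by
    refine eq_at_zero_of_hasDerivAt_zero (f := fun t => x t * x' t - E * t) fun t => ?_
    have h := ((hx' t).fun_mul (hx'' t)).fun_sub ((hasDerivAt_id' t).const_mul E)
    refine h.congr_deriv ?_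
    have := hne t
    rw [hacc t, ← hE t]
    field_simp
    ring
  have hQ : ∀ t, x t ^ 2 - (E * t ^ 2 + 2 * (x 0 * x' 0) * t)
      = x 0 ^ 2 - (E * 0 ^ 2 + 2 * (x 0 * x' 0) * 0) := by
    refine eq_at_zero_of_hasDerivAt_zero
      (f := fun t => x t ^ 2 - (E * t ^ 2 + 2 * (x 0 * x' 0) * t)) fun t => ?_
    have h := ((hx' t).fun_pow 2).fun_sub ((((hasDerivAt_id' t).fun_pow 2).const_mul E).fun_add
      ((hasDerivAt_id' t).const_mul (2 * (x 0 * x' 0))))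
    refine h.congr_deriv ?_
    have := hP t
    push_cast
    linear_combination 2 * this
  refine ⟨E, 2 * (x 0 * x' 0), x 0 ^ 2, fun t => by linear_combination hQ t, ?_⟩
  have := hne 0
  rw [hEdef]
  field_simp
  ring
end

section
/- Let V₀ > 0, α > 0, and let X, Y : ℝ → ℝ be differentiable with X(t) > 0 for all t. Define x(t) := √(X(t)² + Y(t)²) and z(t) := √(αV₀)·arctan(Y(t)/X(t)). Then for all t: x'(t)² + z'(t)²/(α·V(x(t))) = X'(t)² + Y'(t)², where V(s) = V₀/s². In other words, the point transformation (X,Y) ↦ (x,z) is an isometry between the flat Euclidean plane ds² = dX² + dY² and the two-dimensional Eisenhart metric ds² = dx² + dz²/(αV(x)) for the Ermakov potential, and it carries the Hamiltonian H₁₊₁ = ½p_x² + (αV₀/(2x²))p_z² into the free-particle Hamiltonian ½(p_X² + p_Y²). -/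
/-! In polar coordinates `r = √(X² + Y²)`, `θ = arctan (Y / X)` on the half-plane `X > 0`, the
velocities are `r' = (X X' + Y Y') / r` and `θ' = (X Y' - Y X') / r²`. With `x = r`, `z = √(αV₀) θ`,
the Eisenhart kinetic term is `r'² + r² θ'²`, which equals `X'² + Y'²` by the two-square identity
`(X X' + Y Y')² + (X Y' - Y X')² = (X² + Y²) (X'² + Y'²)`. -/

/-- The polar-type point transformation `x = √(X² + Y²)`,
`z = √(αV₀) arctan(Y/X)` is an isometry between the flat plane and the
two-dimensional Eisenhart metric `ds² = dx² + dz²/(αV(x))` for the Ermakov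
potential `V(s) = V₀/s²`: along any differentiable curve,
`x'² + z'²/(α V(x)) = X'² + Y'²`. -/
theorem ermakov_eisenhart_flat_isometry
    (V₀ α : ℝ) (hV₀ : 0 < V₀) (hα : 0 < α)
    (X X' Y Y' : ℝ → ℝ)
    (hX' : ∀ t, HasDerivAt X (X' t) t) (hY' : ∀ t, HasDerivAt Y (Y' t) t)
    (hXpos : ∀ t, 0 < X t)
    (x z : ℝ → ℝ)
    (hx : ∀ t, x t = Real.sqrt (X t ^ 2 + Y t ^ 2))
    (hz : ∀ t, z t = Real.sqrt (α * V₀) * Real.arctan (Y t / X t)) :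
    ∃ x' z' : ℝ → ℝ,
      (∀ t, HasDerivAt x (x' t) t) ∧ (∀ t, HasDerivAt z (z' t) t) ∧
      ∀ t, x' t ^ 2 + z' t ^ 2 / (α * (V₀ / x t ^ 2)) = X' t ^ 2 + Y' t ^ 2 := by
  have hR : ∀ t, 0 < X t ^ 2 + Y t ^ 2 := fun t => by
    have := hXpos t
    positivity
  obtain rfl : x = fun t => Real.sqrt (X t ^ 2 + Y t ^ 2) := funext hx
  obtain rfl : z = fun t => Real.sqrt (α * V₀) * Real.arctan (Y t / X t) := funext hz
  refine ⟨fun t => (X t * X' t + Y t * Y' t) / Real.sqrt (X t ^ 2 + Y t ^ 2),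
    fun t => Real.sqrt (α * V₀) * ((X t * Y' t - Y t * X' t) / (X t ^ 2 + Y t ^ 2)),
    fun t => ?_, fun t => ?_, fun t => ?_⟩
  · have h := (((hX' t).fun_pow 2).fun_add ((hY' t).fun_pow 2)).sqrt (hR t).ne'
    refine h.congr_deriv ?_
    have := Real.sqrt_pos.2 (hR t)
    field_simp
    ring
  · have hX0 := (hXpos t).ne'
    have h := (((hY' t).fun_div (hX' t) hX0).arctan).const_mul (Real.sqrt (α * V₀))
    refine h.congr_deriv ?_
    have := (hR t).ne'
    have h2 : 1 + (Y t / X t) ^ 2 = (X t ^ 2 + Y t ^ 2) / X t ^ 2 := by field_simp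
    rw [h2]
    field_simp
  · have := (hR t).ne'
    simp only [div_pow, mul_pow, Real.sq_sqrt (hR t).le, Real.sq_sqrt (mul_pos hα hV₀).le]
    field_simp
    ring
end

section
/- Let ω > 0 and set s := √ω. Let X : ℝ → ℝ be twice differentiable with X''(T) = 0 for all T (a free-particle solution). Define x(t) := cos(s·t)·X(tan(s·t)) for t in the open interval (−π/(2s), π/(2s)). Then x is twice differentiable on that interval and satisfies x''(t) + ω·x(t) = 0 for all t ∈ (−π/(2s), π/(2s)). -/
/-! A free-particle solution is affine, `X(T) = a + b T`. Multiplying by `cos(st)` clears the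
denominator of `tan(st)` wherever `cos(st) ≠ 0`, so on the given interval
`x(t) = a cos(st) + b sin(st)`, which is the general solution of the oscillator equation. -/

theorem free_particle_affine (X X' : ℝ → ℝ)
    (hX' : ∀ T, HasDerivAt X (X' T) T) (hX'' : ∀ T, HasDerivAt X' 0 T) (T : ℝ) :
    X T = X 0 + X' 0 * T := by
  have hconst : ∀ T, X' T = X' 0 := fun T =>
    is_const_of_deriv_eq_zero (fun T => (hX'' T).differentiableAt) (fun T => (hX'' T).deriv) T 0
  have hd : ∀ T, HasDerivAt (fun T => X T - X' 0 * T) 0 T := fun T => by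
    have h := (hX' T).sub ((hasDerivAt_id T).const_mul (X' 0))
    rw [hconst T, mul_one, sub_self] at h
    exact h
  have h := is_const_of_deriv_eq_zero (fun T => (hd T).differentiableAt)
    (fun T => (hd T).deriv) T 0
  simp only [mul_zero, sub_zero] at h
  linarith

/-- Part (B) of the paper's main Theorem, concretely: if `X` is a free-particle
solution (`X'' = 0`) and `s = √ω`, then `x(t) = cos(st) · X(tan(st))` solves the
oscillator equation `x'' + ω x = 0` on `(−π/(2s), π/(2s))`. -/
theorem oscillator_from_free_particle
    (ω : ℝ) (hω : 0 < ω) (s : ℝ) (hs : s = Real.sqrt ω)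
    (X X' : ℝ → ℝ)
    (hX' : ∀ T, HasDerivAt X (X' T) T) (hX'' : ∀ T, HasDerivAt X' 0 T)
    (x : ℝ → ℝ)
    (hx : ∀ t, x t = Real.cos (s * t) * X (Real.tan (s * t))) :
    ∃ x' : ℝ → ℝ,
      (∀ t ∈ Set.Ioo (-(Real.pi / (2 * s))) (Real.pi / (2 * s)),
        HasDerivAt x (x' t) t) ∧
      ∀ t ∈ Set.Ioo (-(Real.pi / (2 * s))) (Real.pi / (2 * s)),
        HasDerivAt x' (-(ω * x t)) t := by
  have hs0 : 0 < s := hs ▸ Real.sqrt_pos.mpr hω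
  have hss : s * s = ω := hs ▸ Real.mul_self_sqrt hω.le
  have hlin : ∀ t, HasDerivAt (fun t => s * t) s t := fun t => by
    simpa using (hasDerivAt_id t).const_mul s
  have hxeq : ∀ t ∈ Set.Ioo (-(Real.pi / (2 * s))) (Real.pi / (2 * s)),
      x t = X 0 * Real.cos (s * t) + X' 0 * Real.sin (s * t) := by
    rintro t ⟨h1, h2⟩
    have hmul : s * (Real.pi / (2 * s)) = Real.pi / 2 := by field_simp
    have hcos : 0 < Real.cos (s * t) := by
      apply Real.cos_pos_of_mem_Ioo
      constructor <;> nlinarith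
    rw [hx, free_particle_affine X X' hX' hX'', ← Real.tan_mul_cos hcos.ne']
    ring
  refine ⟨fun t => X 0 * (-Real.sin (s * t) * s) + X' 0 * (Real.cos (s * t) * s), ?_, ?_⟩
  · intro t ht
    -- The closed form holds on a neighbourhood of `t`, which suffices for the derivative.
    refine HasDerivAt.congr_of_eventuallyEq
      (((hlin t).cos.const_mul (X 0)).add ((hlin t).sin.const_mul (X' 0))) ?_
    filter_upwards [isOpen_Ioo.mem_nhds ht] with u hu using hxeq u hu
  · intro t ht
    rw [hxeq t ht, ← hss]
    refine HasDerivAt.congr_deriv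
      ((((hlin t).sin.neg.mul_const s).const_mul (X 0)).add
        (((hlin t).cos.mul_const s).const_mul (X' 0))) ?_
    ring
end

section
/- Let ω ∈ ℝ and let X, Y : ℝ → ℝ be twice differentiable with X''(t) = −ω·X(t) and Y''(t) = −ω·Y(t) for all t, and suppose X(t)² + Y(t)² > 0 for all t. Set W := X(0)·Y'(0) − X'(0)·Y(0) and x(t) := √(X(t)² + Y(t)²). Then x is twice differentiable and satisfies x''(t) = −ω·x(t) + W²/x(t)³ for all t; that is, x solves Newton's equation ẍ = −V'_C(x) for the Ermakov potential with oscillator V_C(x) = (ω/2)x² + V₀/x², where 2V₀ = W². -/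
/-!
With `x² = X² + Y²` one has `x x' = X X' + Y Y'`. Differentiating the quotient
`(X X' + Y Y') / x` and using the oscillator equations gives
`x'' = -ω x + ((X² + Y²)(X'² + Y'²) - (X X' + Y Y')²) / x³`. By Lagrange's identity the
last numerator is the square of the Wronskian `X Y' - X' Y`, which is constant in time.
-/

/-- Part (C) of the paper's main Theorem (Pinney superposition), concretely:
if `X, Y` solve the oscillator equation `X'' = −ωX`, `Y'' = −ωY` with
`X² + Y² > 0` and Wronskian `W = X(0)Y'(0) − X'(0)Y(0)`, then
`x = √(X² + Y²)` solves Newton's equation for the Ermakov potential with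
oscillator: `x'' = −ωx + W²/x³`. -/
theorem ermakov_oscillator_from_oscillator
    (ω : ℝ) (X X' Y Y' : ℝ → ℝ)
    (hX' : ∀ t, HasDerivAt X (X' t) t)
    (hX'' : ∀ t, HasDerivAt X' (-(ω * X t)) t)
    (hY' : ∀ t, HasDerivAt Y (Y' t) t)
    (hY'' : ∀ t, HasDerivAt Y' (-(ω * Y t)) t)
    (hpos : ∀ t, 0 < X t ^ 2 + Y t ^ 2)
    (W : ℝ) (hW : W = X 0 * Y' 0 - X' 0 * Y 0)
    (x : ℝ → ℝ) (hx : ∀ t, x t = Real.sqrt (X t ^ 2 + Y t ^ 2)) :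
    ∃ x' : ℝ → ℝ, (∀ t, HasDerivAt x (x' t) t) ∧
      ∀ t, HasDerivAt x' (-(ω * x t) + W ^ 2 / x t ^ 3) t := by
  have hWt : ∀ t, X t * Y' t - X' t * Y t = W := by
    have hd : ∀ t, HasDerivAt (fun s => X s * Y' s - X' s * Y s) 0 t := by
      intro t
      refine (((hX' t).mul (hY'' t)).sub ((hX'' t).mul (hY' t))).congr_deriv ?_
      ring
    intro t
    rw [hW]
    exact is_const_of_deriv_eq_zero (fun s => (hd s).differentiableAt)
      (fun s => (hd s).deriv) t 0
  have hx0 : ∀ t, x t ≠ 0 := by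
    intro t
    rw [hx]
    exact (Real.sqrt_pos.mpr (hpos t)).ne'
  have hxsq : ∀ t, x t ^ 2 = X t ^ 2 + Y t ^ 2 := by
    intro t
    rw [hx, Real.sq_sqrt (hpos t).le]
  have hxd : ∀ t, HasDerivAt x ((X t * X' t + Y t * Y' t) / x t) t := by
    intro t
    have h := (((hX' t).pow 2).add ((hY' t).pow 2)).sqrt (hpos t).ne'
    have hfun : x = fun s => Real.sqrt (X s ^ 2 + Y s ^ 2) := funext hx
    have hder : HasDerivAt x _ t := hfun ▸ h
    refine hder.congr_deriv ?_
    have h0 := hx0 t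
    simp only [Pi.add_apply, Pi.pow_apply]
    rw [← hx t]
    field_simp
    push_cast
    ring
  refine ⟨fun t => (X t * X' t + Y t * Y' t) / x t, hxd, fun t => ?_⟩
  refine ((((hX' t).mul (hX'' t)).add ((hY' t).mul (hY'' t))).div (hxd t)
    (hx0 t)).congr_deriv ?_
  have h0 := hx0 t
  simp only [Pi.add_apply, Pi.mul_apply]
  rw [← hWt t]
  field_simp
  -- After clearing denominators, the claim is Lagrange's identity
  -- `(X² + Y²)(X'² + Y'²) - (XX' + YY')² = (XY' - X'Y)²`, with `x² = X² + Y²`.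
  have e4 : x t ^ 4 = (X t ^ 2 + Y t ^ 2) ^ 2 := by
    rw [← hxsq]; ring
  simp only [e4, hxsq]
  ring
end

section
/- Let ω, W ∈ ℝ and let x : ℝ → ℝ be twice differentiable with x(t) > 0 and x''(t) = −ω·x(t) + W²/x(t)³ for all t. Set y(t) := x(t)². Then y is twice differentiable and satisfies the identity y(t)·y''(t) − ½·(y'(t))² + 2ω·y(t)² = 2W² for all t. -/
/-- Along every positive solution of `x'' = −ωx + W²/x³`, the squared solution
`y = x²` satisfies the identity `y y'' − ½ (y')² + 2ω y² = 2W²`. -/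
theorem ermakov_oscillator_square_identity
    (ω W : ℝ) (x x' x'' : ℝ → ℝ)
    (hx' : ∀ t, HasDerivAt x (x' t) t)
    (hx'' : ∀ t, HasDerivAt x' (x'' t) t)
    (hpos : ∀ t, 0 < x t)
    (hODE : ∀ t, x'' t = -(ω * x t) + W ^ 2 / x t ^ 3)
    (y : ℝ → ℝ) (hy : ∀ t, y t = x t ^ 2) :
    ∃ y' y'' : ℝ → ℝ,
      (∀ t, HasDerivAt y (y' t) t) ∧ (∀ t, HasDerivAt y' (y'' t) t) ∧
      ∀ t, y t * y'' t - (1 / 2) * (y' t) ^ 2 + 2 * ω * (y t) ^ 2 = 2 * W ^ 2 := by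
  obtain rfl : y = fun t => x t ^ 2 := funext hy
  refine ⟨fun t => 2 * x t * x' t, fun t => 2 * x' t * x' t + 2 * x t * x'' t,
    fun t => ?_, fun t => ((hx' t).const_mul 2).mul (hx'' t), fun t => ?_⟩
  · simpa using (hx' t).fun_pow 2
  · have hx0 : x t ≠ 0 := (hpos t).ne'
    simp only [hODE t]
    -- The first-derivative terms cancel; the equation of motion evaluates the remainder.
    field_simp
    ring
end

section
/- Let α ≠ 0 be a real constant, let G : ℝ → ℝ be differentiable with G(s) ≠ 0 for all s, and let X, z, p_X, p_z : ℝ → ℝ be differentiable functions satisfying for all t: X'(t) = G(X(t))·p_X(t), z'(t) = G(X(t))·p_z(t), p_X'(t) = −G'(X(t))·(p_X(t)² + p_z(t)²/α), p_z'(t) = 0, together with the null constraint G(X(t))·(p_X(t)² + p_z(t)²/α) = 0 for all t. Then p_X and p_z are constant functions, and setting τ(t) := ∫₀ᵗ G(X(s)) ds one has X(t) = X(0) + p_X(0)·τ(t) and z(t) = z(0) + p_z(0)·τ(t) for all t. In particular, in the new time variable τ the system reads X'' = 0, z'' = 0. -/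
/-! The null constraint together with `G ≠ 0` forces `pX ^ 2 + pz ^ 2 / α = 0` along the curve, so
both momenta have zero derivative and are constant. As `τ' = G ∘ X` by the fundamental theorem of
calculus, `X - pX 0 * τ` and `z - pz 0 * τ` also have zero derivative. -/

/-- Appendix of the paper: the null geodesics of the conformally flat
two-dimensional Eisenhart metric, governed by the constrained Hamiltonian
`H = G(X)(p_X² + p_z²/α) = 0`, have constant momenta, and in the new time
variable `τ(t) = ∫₀ᵗ G(X(s)) ds` they take the free-particle form
`X = X(0) + p_X(0)·τ`, `z = z(0) + p_z(0)·τ` (i.e. `X'' = 0`, `z'' = 0`). -/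
theorem null_geodesics_linearize
    (α : ℝ) (hα : α ≠ 0) (G G' : ℝ → ℝ)
    (hG : ∀ s, HasDerivAt G (G' s) s) (hGne : ∀ s, G s ≠ 0)
    (X z pX pz : ℝ → ℝ)
    (hX : ∀ t, HasDerivAt X (G (X t) * pX t) t)
    (hz : ∀ t, HasDerivAt z (G (X t) * pz t) t)
    (hpX : ∀ t, HasDerivAt pX (-(G' (X t) * (pX t ^ 2 + pz t ^ 2 / α))) t)
    (hpz : ∀ t, HasDerivAt pz 0 t)
    (hnull : ∀ t, G (X t) * (pX t ^ 2 + pz t ^ 2 / α) = 0)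
    (τ : ℝ → ℝ) (hτ : ∀ t, τ t = ∫ s in (0 : ℝ)..t, G (X s)) :
    (∀ t, pX t = pX 0) ∧ (∀ t, pz t = pz 0) ∧
      (∀ t, X t = X 0 + pX 0 * τ t) ∧ (∀ t, z t = z 0 + pz 0 * τ t) := by
  have hconst : ∀ f : ℝ → ℝ, (∀ t, HasDerivAt f 0 t) → ∀ t, f t = f 0 := fun f hf t =>
    is_const_of_deriv_eq_zero (fun u => (hf u).differentiableAt) (fun u => (hf u).deriv) t 0
  -- Since `G` never vanishes, the null constraint kills the force term in the equation for `pX`.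
  have hpX0 : ∀ t, pX t = pX 0 := hconst pX fun t => by
    have h := (mul_eq_zero.mp (hnull t)).resolve_left (hGne _)
    simpa [h] using hpX t
  have hpz0 : ∀ t, pz t = pz 0 := hconst pz hpz
  have hcont : Continuous fun s => G (X s) :=
    (continuous_iff_continuousAt.mpr fun s => (hG s).continuousAt).comp
      (continuous_iff_continuousAt.mpr fun s => (hX s).continuousAt)
  have hτ' : ∀ t, HasDerivAt τ (G (X t)) t := fun t => by
    rw [funext hτ]
    exact hcont.integral_hasStrictDerivAt 0 t |>.hasDerivAt
  have hτ0 : τ 0 = 0 := by simp [hτ]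
  -- A coordinate whose velocity is `G (X t)` times a constant `p` is affine in `τ`.
  have hlin : ∀ (f : ℝ → ℝ) (p : ℝ), (∀ t, HasDerivAt f (G (X t) * p) t) →
      ∀ t, f t = f 0 + p * τ t := fun f p hf t => by
    have h := hconst (fun u => f u - p * τ u) (fun u => by
      have h1 := (hf u).sub ((hτ' u).const_mul p)
      rwa [mul_comm p, sub_self] at h1) t
    simp only [hτ0] at h
    linarith
  exact ⟨hpX0, hpz0, hlin X _ fun t => hpX0 t ▸ hX t, hlin z _ fun t => hpz0 t ▸ hz t⟩
end

section
/- Let V : ℝ → ℝ be differentiable and α ∈ ℝ. Suppose x, z, p_x, p_z : ℝ → ℝ are differentiable and satisfy for all t: x'(t) = p_x(t), z'(t) = α·V(x(t))·p_z(t), p_x'(t) = −(α/2)·V'(x(t))·p_z(t)², p_z'(t) = 0, and suppose α·p_z(0)² = 2. Then x is twice differentiable and x''(t) = −V'(x(t)) for all t; that is, x solves Newton's equation ẍ = F(x) with F = −V'. -/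
/-- Riemannian Eisenhart lift `H₁₊₁ = ½p_x² + (α/2)V(x)p_z²`: the geodesic
equations with conserved momentum satisfying `α·p_z(0)² = 2` recover Newton's
equation `x'' = −V'(x)`. -/
theorem newton_from_H11
    (V V' : ℝ → ℝ) (α : ℝ)
    (hV : ∀ s, HasDerivAt V (V' s) s)
    (x z px pz : ℝ → ℝ)
    (hx : ∀ t, HasDerivAt x (px t) t)
    (hz : ∀ t, HasDerivAt z (α * V (x t) * pz t) t)
    (hpx : ∀ t, HasDerivAt px (-(α / 2 * V' (x t) * pz t ^ 2)) t)
    (hpz : ∀ t, HasDerivAt pz 0 t)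
    (hc : α * pz 0 ^ 2 = 2) :
    ∃ x' : ℝ → ℝ, (∀ t, HasDerivAt x (x' t) t) ∧
      ∀ t, HasDerivAt x' (-(V' (x t))) t := by
  refine ⟨px, hx, fun t => ?_⟩
  -- `p_z` is conserved, so `α p_z² = 2` holds at every time, not only at `0`.
  have hconst : pz t = pz 0 :=
    is_const_of_deriv_eq_zero (fun s => (hpz s).differentiableAt) (fun s => (hpz s).deriv) t 0
  convert hpx t using 1
  rw [hconst]
  linear_combination (V' (x t) / 2) * hc
end

section
/- Let n ≥ 1, let g be a C² map from (Fin n → ℝ) to the real n×n matrices with g(q) symmetric for every q, and let N : (Fin n → ℝ) → ℝ be C² with N(q) > 0 for all q. Let x : ℝ → (Fin n → ℝ) be a C² curve satisfying, for every index i and every t, the Euler–Lagrange (geodesic) equations d/dt( Σ_j g_{ij}(x(t))·(x^j)'(t) ) = ½ Σ_{j,k} (∂_i g_{jk})(x(t))·(x^j)'(t)·(x^k)'(t), and suppose the curve is null: Σ_{i,j} g_{ij}(x(t))·(x^i)'(t)·(x^j)'(t) = 0 for all t. Let τ : ℝ → ℝ satisfy τ(0) = 0 and τ'(t) = N(x(t))²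 for all t (so τ is strictly increasing), and let σ denote the inverse function of τ on its range. Then the reparametrized curve y := x ∘ σ satisfies, for every index i, the Euler–Lagrange equations of the conformal metric N²g: d/dτ( N(y(τ))²·Σ_j g_{ij}(y(τ))·(y^j)'(τ) ) = ½ Σ_{j,k} ∂_i( N² g_{jk} )(y(τ))·(y^j)'(τ)·(y^k)'(τ). -/
/-!
Write `pᵢ(t) = ∑ⱼ gᵢⱼ(x) ẋʲ` for the momentum of `x`. By the inverse function theorem `σ` has
derivative `N(x(t))⁻²` at `τ t`, so `y′ = N⁻² ẋ` on the (open) range of `τ`, and the conformal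
momentum `N² ∑ⱼ gᵢⱼ(y) y′ʲ` is exactly `pᵢ ∘ σ`. Its derivative is `N⁻² ṗᵢ`, which the
Euler–Lagrange equations of `g` turn into `½ N⁻² ∑ⱼₖ ∂ᵢgⱼₖ ẋʲ ẋᵏ`. On the other side, the product
rule gives `∂ᵢ(N² gⱼₖ) = 2 N ∂ᵢN gⱼₖ + N² ∂ᵢgⱼₖ`; contracted with `y′ʲ y′ᵏ`, the first term is a
multiple of the energy and vanishes because the curve is null, and the second is the same expression.
-/

/-- Covariance direction of the paper's Theorem: null solutions of the
Euler–Lagrange (geodesic) equations of `L = ½ gᵢⱼ(x) ẋⁱ ẋʲ` are mapped, under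
the time reparametrization `dτ = N(x)² dt`, to solutions of the Euler–Lagrange
equations of the conformal Lagrangian `L̄ = ½ N² gᵢⱼ(x) x′ⁱ x′ʲ`. -/
theorem null_geodesics_conformal_covariance
    (n : ℕ) (hn : 1 ≤ n)
    (g : (Fin n → ℝ) → Fin n → Fin n → ℝ)
    (hg : ∀ i j, ContDiff ℝ 2 fun q => g q i j)
    (hgsymm : ∀ q i j, g q i j = g q j i)
    (N : (Fin n → ℝ) → ℝ) (hN : ContDiff ℝ 2 N) (hNpos : ∀ q, 0 < N q)
    (x : ℝ → Fin n → ℝ) (hx : ContDiff ℝ 2 x)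
    (hEL : ∀ (i : Fin n) (t : ℝ),
      deriv (fun t => ∑ j, g (x t) i j * deriv (fun s => x s j) t) t =
        (1 / 2) * ∑ j, ∑ k,
          (fderiv ℝ (fun q => g q j k) (x t)) (Pi.single i 1) *
            deriv (fun s => x s j) t * deriv (fun s => x s k) t)
    (hnull : ∀ t : ℝ,
      ∑ i, ∑ j, g (x t) i j * deriv (fun s => x s i) t * deriv (fun s => x s j) t = 0)
    (τ : ℝ → ℝ) (hτ0 : τ 0 = 0)
    (hτ : ∀ t, HasDerivAt τ (N (x t) ^ 2) t)
    (σ : ℝ → ℝ) (hσ : Function.LeftInverse σ τ)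
    (y : ℝ → Fin n → ℝ) (hy : ∀ s, y s = x (σ s)) :
    ∀ (i : Fin n), ∀ s ∈ Set.range τ,
      deriv (fun s => N (y s) ^ 2 * ∑ j, g (y s) i j * deriv (fun r => y r j) s) s =
        (1 / 2) * ∑ j, ∑ k,
          (fderiv ℝ (fun q => N q ^ 2 * g q j k) (y s)) (Pi.single i 1) *
            deriv (fun r => y r j) s * deriv (fun r => y r k) s := by
  rintro i _ ⟨t, rfl⟩
  have hxj : ∀ j, ContDiff ℝ 2 fun s => x s j := fun j => contDiff_pi.1 hx j
  have hNne : ∀ q, N q ^ 2 ≠ 0 := fun q => (pow_pos (hNpos q) 2).ne'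
  have hτs : ∀ t, HasStrictDerivAt τ (N (x t) ^ 2) t := fun t =>
    hasStrictDerivAt_of_hasDerivAt_of_continuousAt (Filter.Eventually.of_forall hτ)
      ((hN.continuous.comp hx.continuous).pow 2).continuousAt
  have hσd : ∀ t, HasDerivAt σ (N (x t) ^ 2)⁻¹ (τ t) := fun t =>
    ((hτs t).to_local_left_inverse (hNne _) (Filter.Eventually.of_forall hσ)).hasDerivAt
  have hrange : Set.range τ ∈ nhds (τ t) := by
    have h := (hτs t).map_nhds_eq (hNne _)
    rw [← h]
    exact Filter.range_mem_map
  have hydot : ∀ t j, deriv (fun r => y r j) (τ t) =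
      deriv (fun s => x s j) t * (N (x t) ^ 2)⁻¹ := by
    intro t j
    have h1 : HasDerivAt (fun s => x s j) (deriv (fun s => x s j) t) (σ (τ t)) := by
      rw [hσ t]
      exact ((hxj j).differentiable (by norm_num) t).hasDerivAt
    simp only [hy]
    exact (h1.comp (τ t) (hσd t)).deriv
  have hP : DifferentiableAt ℝ (fun t => ∑ j, g (x t) i j * deriv (fun s => x s j) t) t := by
    refine DifferentiableAt.fun_sum fun j _ => DifferentiableAt.mul ?_ ?_
    · exact (((hg i j).comp hx).differentiable (by norm_num)) t
    · exact ((hxj j).differentiable_deriv_two) t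
  have hmomentum : (fun s => N (y s) ^ 2 * ∑ j, g (y s) i j * deriv (fun r => y r j) s)
      =ᶠ[nhds (τ t)] (fun t => ∑ j, g (x t) i j * deriv (fun s => x s j) t) ∘ σ := by
    filter_upwards [hrange]
    rintro _ ⟨u, rfl⟩
    -- `hydot` speaks of `deriv` of `y`, so it has to be used before `hy` unfolds `y`.
    simp only [Function.comp, hydot]
    simp only [hy, hσ u, Finset.mul_sum]
    refine Finset.sum_congr rfl fun j _ => ?_
    have := (hNpos (x u)).ne'
    field_simp
  have hPd := hP.hasDerivAt
  rw [hEL, ← hσ t] at hPd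
  rw [hmomentum.deriv_eq, (hPd.comp (τ t) (hσd t)).deriv]
  have hfd : ∀ j k, (fderiv ℝ (fun q => N q ^ 2 * g q j k) (x t)) (Pi.single i 1) =
      N (x t) ^ 2 * fderiv ℝ (fun q => g q j k) (x t) (Pi.single i 1) +
        2 * N (x t) * fderiv ℝ N (x t) (Pi.single i 1) * g (x t) j k := by
    intro j k
    have h1 := (hN.differentiable (by norm_num) (x t)).hasFDerivAt
    have h2 := ((hg j k).differentiable (by norm_num) (x t)).hasFDerivAt
    rw [((h1.pow 2).fun_mul h2).fderiv]
    simp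
    ring
  simp only [hydot]
  simp only [hy, hσ t, hfd]
  have hsplit : ∀ j k : Fin n,
      (N (x t) ^ 2 * fderiv ℝ (fun q => g q j k) (x t) (Pi.single i 1) +
        2 * N (x t) * fderiv ℝ N (x t) (Pi.single i 1) * g (x t) j k) *
          (deriv (fun s => x s j) t * (N (x t) ^ 2)⁻¹) *
          (deriv (fun s => x s k) t * (N (x t) ^ 2)⁻¹) =
      (N (x t) ^ 2)⁻¹ * (fderiv ℝ (fun q => g q j k) (x t) (Pi.single i 1) *
          deriv (fun s => x s j) t * deriv (fun s => x s k) t) +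
        2 * N (x t) * fderiv ℝ N (x t) (Pi.single i 1) * ((N (x t) ^ 2)⁻¹) ^ 2 *
          (g (x t) j k * deriv (fun s => x s j) t * deriv (fun s => x s k) t) := by
    intro j k
    have := (hNpos (x t)).ne'
    field_simp
  simp only [hsplit, Finset.sum_add_distrib, ← Finset.mul_sum, hnull t]
  ring
end
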